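/- Let G be a finite non-cyclic subgroup of N such that π(G) is cyclic of order 4 and the order of G ∩ T lies in {1,2,3,5}. Then G is conjugate by an element of N either to the subgroup ⟨τ_{ζ₅,ζ₅²}, ι₁·s⟩ generated by (x,y) ↦ (ζ₅x, ζ₅²y) and (x,y) ↦ (y⁻¹, x), which is isomorphic to 𝔉₅ = C₅⋊C₄ of order 20, or to the subgroup ⟨τ_{−1,−1}, ι₁·s⟩ generated by (x,y) ↦ (−x,−y) and (x,y) ↦ (y⁻¹, x), which is isomorphic to C₂ × C₄. -/

import Mathlib

noncomputable section

/-- The torus ℂˣ × ℂˣ on which the group N acts. -/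
abbrev TT : Type := ℂˣ × ℂˣ

/-- The inversion ι₁ : (x,y) ↦ (x⁻¹, y), as a group automorphism of the torus. -/
def j1 : MulAut TT := MulEquiv.prodCongr (MulEquiv.inv ℂˣ) (MulEquiv.refl ℂˣ)

/-- The inversion ι₂ : (x,y) ↦ (x, y⁻¹), as a group automorphism of the torus. -/
def j2 : MulAut TT := MulEquiv.prodCongr (MulEquiv.refl ℂˣ) (MulEquiv.inv ℂˣ)

/-- The swap s : (x,y) ↦ (y,x), as a group automorphism of the torus. -/
def sA : MulAut TT := MulEquiv.prodComm

/-- D = ⟨ι₁, ι₂, s⟩ ≅ C₂≀C₂ ≅ D₄, the group of automorphisms of the torus permuting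
the four boundary lines of ℙ¹×ℙ¹. -/
def DD : Subgroup (MulAut TT) := Subgroup.closure {j1, j2, sA}

/-- N = T ⋊ D, the normalizer of the maximal torus in Aut(ℙ¹×ℙ¹): the group of
bijections of ℂˣ × ℂˣ generated by the scalings τ_{a,b} : (x,y) ↦ (ax,by),
the inversions ι₁, ι₂, and the swap s.  The element ⟨(a,b), d⟩ acts on p ∈ ℂˣ × ℂˣ
by p ↦ (a,b) * d(p). -/
abbrev NQ : Type := SemidirectProduct TT DD DD.subtype

/-- ι₁ as an element of D. -/
def dj1 : DD := ⟨j1, Subgroup.subset_closure (by simp)⟩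

/-- ι₂ as an element of D. -/
def dj2 : DD := ⟨j2, Subgroup.subset_closure (by simp)⟩

/-- s as an element of D. -/
def dsA : DD := ⟨sA, Subgroup.subset_closure (by simp)⟩

/-- ι₁ι₂ as an element of D. -/
def d12 : DD := dj1 * dj2

/-- ι₁·s (i.e. (x,y) ↦ (y⁻¹, x)) as an element of D. -/
def d1s : DD := dj1 * dsA

/-- The scaling τ_{a,b} : (x,y) ↦ (ax, by), as an element of N. -/
def tl (a b : ℂˣ) : NQ := SemidirectProduct.inl ((a, b) : TT)

/-- The element of N given by an element of D. -/
def rr (d : DD) : NQ := SemidirectProduct.inr d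

/-- The scaling subgroup T ≤ N. -/
def Tsub : Subgroup NQ := (SemidirectProduct.inl : TT →* NQ).range

/-- The projection π : N → N/T ≅ D. -/
def πN : NQ →* DD := SemidirectProduct.rightHom

/-- ζ_m = exp(2πi/m), a fixed primitive m-th root of unity in ℂ (as a unit). -/
def ζu (m : ℕ) : ℂˣ :=
  Units.mk0 (Complex.exp (2 * Real.pi * Complex.I / m)) (Complex.exp_ne_zero _)

/-- The point of ℂˣ × ℂˣ is fixed by the element g of N. -/
def fixes (g : NQ) (p : TT) : Prop := g.left * (g.right : MulAut TT) p = p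


@[simp] lemma j1_apply (p : TT) : j1 p = (p.1⁻¹, p.2) := rfl
@[simp] lemma j2_apply (p : TT) : j2 p = (p.1, p.2⁻¹) := rfl
@[simp] lemma sA_apply (p : TT) : sA p = (p.2, p.1) := rfl

lemma d1s_apply (p : TT) : (d1s : MulAut TT) p = (p.2⁻¹, p.1) := rfl

/-- Every element of D acts by signed permutations of the exponents. -/
lemma DD_form (d : MulAut TT) (hd : d ∈ DD) :
    ∃ e f : ℤ, (e = 1 ∨ e = -1) ∧ (f = 1 ∨ f = -1) ∧
      ((∀ p : TT, d p = (p.1 ^ e, p.2 ^ f)) ∨ (∀ p : TT, d p = (p.2 ^ e, p.1 ^ f))) := by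
  unfold DD at hd
  induction hd using Subgroup.closure_induction with
  | mem x hx =>
    rcases hx with rfl | rfl | rfl
    · exact ⟨-1, 1, by simp, by simp, Or.inl fun p => by simp⟩
    · exact ⟨1, -1, by simp, by simp, Or.inl fun p => by simp⟩
    · exact ⟨1, 1, by simp, by simp, Or.inr fun p => by simp⟩
  | one => exact ⟨1, 1, by simp, by simp, Or.inl fun p => by simp⟩
  | mul x y _ _ hx hy =>
    obtain ⟨e, f, he, hf, h⟩ := hx
    obtain ⟨e', f', he', hf', h'⟩ := hy
    rcases h with h | h <;> rcases h' with h' | h'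
    · refine ⟨e' * e, f' * f, by grind, by grind, Or.inl fun p => ?_⟩
      rw [MulAut.mul_apply, h', h]; simp [zpow_mul]
    · refine ⟨e' * e, f' * f, by grind, by grind, Or.inr fun p => ?_⟩
      rw [MulAut.mul_apply, h', h]; simp [zpow_mul]
    · refine ⟨f' * e, e' * f, by grind, by grind, Or.inr fun p => ?_⟩
      rw [MulAut.mul_apply, h', h]; simp [zpow_mul]
    · refine ⟨f' * e, e' * f, by grind, by grind, Or.inl fun p => ?_⟩
      rw [MulAut.mul_apply, h', h]; simp [zpow_mul]
  | inv x _ hx =>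
    obtain ⟨e, f, he, hf, h⟩ := hx
    have hee : e * e = 1 := by rcases he with rfl | rfl <;> rfl
    have hff : f * f = 1 := by rcases hf with rfl | rfl <;> rfl
    rcases h with h | h
    · refine ⟨e, f, he, hf, Or.inl fun p => ?_⟩
      have : x (p.1 ^ e, p.2 ^ f) = p := by rw [h]; simp [← zpow_mul, hee, hff]
      rw [MulAut.inv_apply, MulEquiv.symm_apply_eq, this]
    · refine ⟨f, e, hf, he, Or.inr fun p => ?_⟩
      have : x (p.2 ^ f, p.1 ^ e) = p := by rw [h]; simp [← zpow_mul, hee, hff]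
      rw [MulAut.inv_apply, MulEquiv.symm_apply_eq, this]

lemma DD_order4 (d : DD) (hd : orderOf d = 4) : d = d1s ∨ d = d1s⁻¹ := by
  have h2 : d ^ 2 ≠ 1 := by
    intro h
    have := orderOf_dvd_of_pow_eq_one h
    rw [hd] at this
    omega
  obtain ⟨e, f, he, hf, h⟩ := DD_form d d.2
  have hee : e * e = 1 := by rcases he with rfl | rfl <;> rfl
  have hff : f * f = 1 := by rcases hf with rfl | rfl <;> rfl
  rcases h with h | h
  · exfalso; apply h2
    apply Subtype.ext
    apply MulEquiv.ext
    intro p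
    simp only [pow_two, Subgroup.coe_mul, MulAut.mul_apply, h]
    simp [← zpow_mul, hee, hff]
  · by_cases hef : e = f
    · exfalso; apply h2
      apply Subtype.ext
      apply MulEquiv.ext
      intro p
      subst hef
      simp only [pow_two, Subgroup.coe_mul, MulAut.mul_apply, h]
      simp [← zpow_mul, hee]
    · rcases he with rfl | rfl <;> rcases hf with rfl | rfl
      · exact absurd rfl hef
      · right
        rw [eq_inv_iff_mul_eq_one]
        apply Subtype.ext
        apply MulEquiv.ext
        intro p
        simp only [Subgroup.coe_mul, MulAut.mul_apply, h, d1s_apply]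
        simp
      · left
        apply Subtype.ext
        apply MulEquiv.ext
        intro p
        rw [h, d1s_apply]; simp
      · exact absurd rfl hef

lemma d1s_pow4 : d1s ^ 4 = 1 := by
  apply Subtype.ext
  apply MulEquiv.ext
  intro p
  simp [pow_succ, d1s_apply]

lemma orderOf_d1s : orderOf d1s = 4 := by
  have : orderOf d1s = 2 ^ (1 + 1) := by
    apply orderOf_eq_prime_pow
    · intro h
      have h1 := congrArg (fun d : DD => ((d : MulAut TT) (1, Units.mk0 2 two_ne_zero)).2) h
      have h2 := congrArg (fun u : ℂˣ => (u : ℂ)) h1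
      simp [pow_succ, d1s_apply] at h2
      norm_num at h2
    · simpa using d1s_pow4
  simpa using this

lemma inl_conj (t : TT) : rr d1s * SemidirectProduct.inl t * (rr d1s)⁻¹ =
    (SemidirectProduct.inl (t.2⁻¹, t.1) : NQ) := by
  have := (SemidirectProduct.inl_aut (φ := DD.subtype) d1s t).symm
  rw [map_inv] at this
  exact this

/-- Translating the fixed point to the identity. -/
lemma exists_conj (a b : ℂˣ) : ∃ t : TT,
    MulAut.conj (SemidirectProduct.inl t : NQ) ⟨(a, b), d1s⟩ = rr d1s := by
  obtain ⟨z, hz⟩ := IsAlgClosed.exists_pow_nat_eq (((a * b)⁻¹ : ℂˣ) : ℂ) (n := 2) (by norm_num)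
  have hz0 : z ≠ 0 := by
    rintro rfl
    have := (Units.ne_zero ((a * b)⁻¹ : ℂˣ))
    apply this; rw [← hz]; simp
  set v : ℂˣ := Units.mk0 z hz0
  have hv : v ^ 2 = (a * b)⁻¹ := Units.ext (by simpa [v] using hz)
  have hv' : v * v * a * b = 1 := by
    rw [← pow_two, hv, mul_assoc, inv_mul_cancel]
  refine ⟨(v * b, v), ?_⟩
  rw [MulAut.conj_apply]
  have hval : ∀ p : TT, (DD.subtype d1s) p = (p.2⁻¹, p.1) := d1s_apply
  apply SemidirectProduct.ext
  · simp only [rr, SemidirectProduct.mul_left, SemidirectProduct.inv_left,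
      SemidirectProduct.left_inl, SemidirectProduct.right_inl, SemidirectProduct.mul_right,
      SemidirectProduct.left_inr, map_one, MulAut.one_apply, inv_one, one_mul, hval]
    ext1
    · simp only [Prod.fst_mul, Prod.snd_inv, inv_inv, Prod.fst_one]
      rw [← hv']; ac_rfl
    · simp only [Prod.snd_mul, Prod.fst_inv, Prod.snd_one]
      rw [mul_inv_eq_one]
  · simp [rr]

lemma closure_eq (G : Subgroup NQ) (hr : rr d1s ∈ G)
    (hz : ∀ g ∈ G, g.right ∈ Subgroup.zpowers d1s) (t : TT)
    (hA : G.comap (SemidirectProduct.inl : TT →* NQ) = Subgroup.zpowers t) :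
    G = Subgroup.closure {SemidirectProduct.inl t, rr d1s} := by
  apply le_antisymm
  · intro g hg
    obtain ⟨k, hk⟩ := Subgroup.mem_zpowers_iff.1 (hz g hg)
    have hk' : (SemidirectProduct.inr g.right : NQ) = rr d1s ^ k := by
      rw [← hk, map_zpow]; rfl
    have hg2 := SemidirectProduct.inl_left_mul_inr_right g
    rw [hk'] at hg2
    have hl : g.left ∈ G.comap (SemidirectProduct.inl : TT →* NQ) := by
      rw [Subgroup.mem_comap, eq_mul_inv_of_mul_eq hg2]
      exact G.mul_mem hg (G.inv_mem (G.zpow_mem hr k))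
    rw [hA] at hl
    obtain ⟨m, hm⟩ := Subgroup.mem_zpowers_iff.1 hl
    rw [← hg2, ← hm, map_zpow]
    exact Subgroup.mul_mem _ (Subgroup.zpow_mem _ (Subgroup.subset_closure (by simp)) _)
      (Subgroup.zpow_mem _ (Subgroup.subset_closure (by simp)) _)
  · rw [Subgroup.closure_le]
    rintro x (rfl | rfl)
    · have : t ∈ G.comap (SemidirectProduct.inl : TT →* NQ) := by
        rw [hA]; exact Subgroup.mem_zpowers t
      exact this
    · exact hr

lemma card_G (G : Subgroup NQ) (hord : Nat.card (Subgroup.map πN G) = 4) :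
    Nat.card G = Nat.card (G ⊓ Tsub : Subgroup NQ) * 4 := by
  rw [← hord, ← Subgroup.relIndex_ker]
  have hk : πN.ker = Tsub := (SemidirectProduct.range_inl_eq_ker_rightHom).symm
  rw [hk, ← Subgroup.card_mul_index (Tsub.subgroupOf G), Subgroup.relIndex]
  congr 1
  rw [← Subgroup.inf_subgroupOf_left]
  exact Nat.card_congr (Subgroup.subgroupOfEquivOfLe inf_le_left).toEquiv

lemma zpowers_eq_of_prime (A : Subgroup TT) (p : ℕ) [hp : Fact p.Prime] (hA : Nat.card A = p)
    (t : TT) (ht : t ∈ A) (h1 : t ≠ 1) : A = Subgroup.zpowers t := by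
  have h := zpowers_eq_top_of_prime_card (G := A) hA (g := ⟨t, ht⟩)
    (by intro h; exact h1 (congrArg Subtype.val h))
  have := congrArg (Subgroup.map A.subtype) h
  rw [MonoidHom.map_zpowers] at this
  rw [← MonoidHom.range_eq_map, Subgroup.range_subtype] at this
  exact this.symm

lemma nonempty_zmod (H : Type) [Group H] [IsCyclic H] (n : ℕ) (h : Nat.card H = n) :
    Nonempty (H ≃* Multiplicative (ZMod n)) := by
  subst h
  exact ⟨(zmodCyclicMulEquiv inferInstance).symm⟩

lemma c2c4 : Nonempty ((Subgroup.closure {tl (-1) (-1), rr d1s} : Subgroup NQ) ≃*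
        Multiplicative (ZMod 2 × ZMod 4)) := by
  set a : NQ := tl (-1) (-1) with ha
  set b : NQ := rr d1s with hb
  have hab : Commute a b := by
    have := inl_conj (-1, -1)
    rw [mul_inv_eq_iff_eq_mul] at this
    have h2 : ((-1 : ℂˣ), (-1 : ℂˣ)) = ((-1 : ℂˣ)⁻¹, (-1 : ℂˣ)) := by simp
    simp only at this
    rw [← h2] at this
    exact this.symm
  have hoa : orderOf a = 2 := by
    apply orderOf_eq_prime
    · rw [ha, tl, ← map_pow, ← map_one (SemidirectProduct.inl : TT →* NQ)]
      congr 1; simp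
    · intro h
      have h1 := congrArg (fun g : NQ => ((g.left.1 : ℂˣ) : ℂ)) h
      simp [ha, tl] at h1
      norm_num at h1
  have hob : orderOf b = 4 := by
    rw [hb, rr, orderOf_injective _ SemidirectProduct.inr_injective, orderOf_d1s]
  obtain ⟨ea⟩ := nonempty_zmod (Subgroup.zpowers a) 2 (by rw [Nat.card_zpowers, hoa])
  obtain ⟨eb⟩ := nonempty_zmod (Subgroup.zpowers b) 4 (by rw [Nat.card_zpowers, hob])
  have hcomm : ∀ (m : Subgroup.zpowers a) (n : Subgroup.zpowers b),
      Commute ((Subgroup.zpowers a).subtype m) ((Subgroup.zpowers b).subtype n) := by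
    rintro ⟨_, i, rfl⟩ ⟨_, j, rfl⟩
    exact (hab.zpow_zpow i j)
  let F := MonoidHom.noncommCoprod (Subgroup.zpowers a).subtype (Subgroup.zpowers b).subtype hcomm
  have hF : Function.Injective F := by
    rw [MonoidHom.noncommCoprod_injective]
    refine ⟨Subtype.coe_injective, Subtype.coe_injective, ?_⟩
    rw [Subgroup.range_subtype, Subgroup.range_subtype, Subgroup.disjoint_def]
    rintro x ⟨i, rfl⟩ ⟨j, hj⟩
    have hr := congrArg SemidirectProduct.left hj
    have h1 : (b ^ j).left = 1 := by rw [hb, rr, ← map_zpow]; rfl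
    have h2 : a ^ i = SemidirectProduct.inl ((-1, -1) ^ i : TT) := by rw [ha, tl, ← map_zpow]
    have h3 : (b ^ j).left = (a ^ i).left := hr
    rw [h1, h2, SemidirectProduct.left_inl] at h3
    show a ^ i = 1
    rw [h2, ← h3, map_one]
  have hR : F.range = Subgroup.closure {a, b} := by
    rw [MonoidHom.noncommCoprod_range, Subgroup.range_subtype, Subgroup.range_subtype,
      Subgroup.zpowers_eq_closure, Subgroup.zpowers_eq_closure, ← Subgroup.closure_union]
    rfl
  rw [← hR]
  exact ⟨(MonoidHom.ofInjective hF).symm.trans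
    ((MulEquiv.prodCongr ea eb).trans (MulEquiv.prodMultiplicative _ _).symm)⟩

lemma zu5 : IsPrimitiveRoot (ζu 5) 5 := by
  rw [← IsPrimitiveRoot.coe_units_iff]
  simpa [ζu] using Complex.isPrimitiveRoot_exp 5 (by norm_num)

lemma conj_swap : Subgroup.map (MulAut.conj (rr dsA)).toMonoidHom
    (Subgroup.closure {tl (ζu 5 ^ 2) (ζu 5), rr d1s}) =
    Subgroup.closure {tl (ζu 5) (ζu 5 ^ 2), rr d1s} := by
  have h1 : (MulAut.conj (rr dsA)) (tl (ζu 5 ^ 2) (ζu 5)) = tl (ζu 5) (ζu 5 ^ 2) := by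
    have := (SemidirectProduct.inl_aut (φ := DD.subtype) dsA (ζu 5 ^ 2, ζu 5)).symm
    rw [map_inv] at this
    exact this
  have h2 : (MulAut.conj (rr dsA)) (rr d1s) = (rr d1s)⁻¹ := by
    rw [MulAut.conj_apply, rr, rr, ← map_inv, ← map_inv, ← map_mul, ← map_mul]
    congr 1
  rw [MonoidHom.map_closure, Set.image_pair]
  simp only [MulEquiv.coe_toMonoidHom, h1, h2]
  apply le_antisymm <;> rw [Subgroup.closure_le] <;> rintro x (rfl | rfl)
  · exact Subgroup.subset_closure (by simp)
  · exact Subgroup.inv_mem _ (Subgroup.subset_closure (by simp))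
  · exact Subgroup.subset_closure (by simp)
  · rw [← inv_inv (rr d1s)]
    exact Subgroup.inv_mem _ (Subgroup.subset_closure (by simp))

/-- The classification of the torus part, of order 1, 2, 3 or 5, stable under ι₁ s. -/
lemma torus_part (A : Subgroup TT) (hinv : ∀ t ∈ A, (t.2⁻¹, t.1) ∈ A)
    (hT : Nat.card A ∈ ({1, 2, 3, 5} : Set ℕ)) :
    A = Subgroup.zpowers 1 ∨ A = Subgroup.zpowers (-1, -1) ∨
    (Nat.card A = 5 ∧ (A = Subgroup.zpowers (ζu 5, ζu 5 ^ 2) ∨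
      A = Subgroup.zpowers (ζu 5 ^ 2, ζu 5))) := by
  by_cases hc1 : Nat.card A = 1
  · left; rw [Subgroup.zpowers_one_eq_bot]; exact Subgroup.eq_bot_of_card_eq A hc1
  right
  have hp : (Nat.card A).Prime := by
    rcases hT with h | h | h | h
    · exact absurd h hc1
    all_goals rw [h]; norm_num
  have : Fact (Nat.card A).Prime := ⟨hp⟩
  obtain ⟨t, ht, ht1⟩ := A.bot_or_exists_ne_one.resolve_left
    (fun h => hc1 (by rw [h]; simp))
  have hA := zpowers_eq_of_prime A _ rfl t ht ht1
  have ho : orderOf t = Nat.card A := by rw [← Nat.card_zpowers, ← hA]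
  have h1 := hinv t ht
  rw [hA] at h1
  obtain ⟨k, hk⟩ := Subgroup.mem_zpowers_iff.1 h1
  obtain ⟨x, y⟩ := t
  simp only [Prod.pow_mk, Prod.mk.injEq] at hk
  obtain ⟨hk1, hk2⟩ := hk
  have hdvd : ((Nat.card A : ℕ) : ℤ) ∣ k * k + 1 := by
    rw [← ho, orderOf_dvd_iff_zpow_eq_one]
    ext1
    · simp only [Prod.pow_mk, Prod.fst_one]
      rw [zpow_add_one, zpow_mul, hk1, inv_zpow, hk2, inv_mul_cancel]
    · simp only [Prod.pow_mk, Prod.snd_one]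
      rw [zpow_add_one, zpow_mul, hk2, hk1, inv_mul_cancel]
  have hpow : ∀ m : ℤ, ((Nat.card A : ℕ) : ℤ) ∣ m → y ^ m = 1 := by
    intro m hm
    rw [← ho, orderOf_dvd_iff_zpow_eq_one] at hm
    exact congrArg Prod.snd hm
  have hy1 : y ≠ 1 := by
    rintro rfl
    apply ht1
    rw [← hk2]; simp
  have hyk : ∀ r : ℤ, ((Nat.card A : ℕ) : ℤ) ∣ k - r → x = y ^ r := by
    intro r hr
    have := hpow _ hr
    rw [zpow_sub, mul_inv_eq_one] at this
    rw [← this, hk2]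
  rcases hT with h | h | h | h
  · exact absurd h hc1
  · left
    have h : Nat.card A = 2 := h
    rw [h] at hdvd hpow hyk
    have hk2' : ((2 : ℕ) : ℤ) ∣ k - 1 := by
      have h3 : (k * k + 1) % 2 = 0 := Int.emod_eq_zero_of_dvd hdvd
      have : k % 2 = 0 ∨ k % 2 = 1 := by omega
      rcases this with h | h
      · simp [Int.add_emod, Int.mul_emod, h] at h3
      · push_cast; omega
    have hx : x = y := by simpa using hyk 1 hk2'
    have hy2 : y ^ (2 : ℤ) = 1 := hpow 2 (by simp)
    have hym : y = -1 := by
      have : (y : ℂ) ^ 2 = 1 := by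
        have := congrArg (fun u : ℂˣ => (u : ℂ)) hy2
        simpa using this
      rcases eq_or_eq_neg_of_sq_eq_sq (y : ℂ) 1 (by rw [this, one_pow]) with h | h
      · exact absurd (Units.ext h) hy1
      · exact Units.ext (by simpa using h)
    rw [hA, hx, hym]
  · exfalso
    have h : Nat.card A = 3 := h
    rw [h] at hdvd
    have h3 : (k * k + 1) % 3 = 0 := Int.emod_eq_zero_of_dvd hdvd
    have : k % 3 = 0 ∨ k % 3 = 1 ∨ k % 3 = 2 := by omega
    rcases this with h | h | h <;> simp [Int.add_emod, Int.mul_emod, h] at h3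
  · right
    have h : Nat.card A = 5 := h
    refine ⟨h, ?_⟩
    have : Fact (Nat.Prime 5) := ⟨by norm_num⟩
    rw [h] at hdvd hpow hyk
    have h3 : (k * k + 1) % 5 = 0 := Int.emod_eq_zero_of_dvd hdvd
    have hk5 : k % 5 = 2 ∨ k % 5 = 3 := by
      have : k % 5 = 0 ∨ k % 5 = 1 ∨ k % 5 = 2 ∨ k % 5 = 3 ∨ k % 5 = 4 := by omega
      rcases this with h | h | h | h | h <;> simp [Int.add_emod, Int.mul_emod, h] at h3 ⊢
    have hy5 : y ^ 5 = 1 := by exact_mod_cast hpow 5 (by simp)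
    have hyo : IsPrimitiveRoot y 5 := by
      rw [IsPrimitiveRoot.iff_orderOf]; exact orderOf_eq_prime hy5 hy1
    have hz1 : ζu 5 ≠ 1 := zu5.ne_one (by norm_num)
    obtain ⟨j, hj⟩ : ∃ j : ℕ, y ^ j = ζu 5 := by
      have hyc : IsPrimitiveRoot (y : ℂ) 5 := IsPrimitiveRoot.coe_units_iff.2 hyo
      have hzc : ((ζu 5 : ℂˣ) : ℂ) ^ 5 = 1 := (IsPrimitiveRoot.coe_units_iff.2 zu5).pow_eq_one
      obtain ⟨j, -, hj⟩ := hyc.eq_pow_of_pow_eq_one hzc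
      exact ⟨j, Units.ext (by simpa using hj)⟩
    rcases hk5 with hk5 | hk5
    · right
      apply zpowers_eq_of_prime A 5 h
      · have := A.pow_mem ht j
        have hx : x = y ^ 2 := by exact_mod_cast hyk 2 (by push_cast; omega)
        rw [Prod.pow_mk, hx, ← pow_mul, mul_comm, pow_mul, hj] at this
        exact this
      · intro h; exact hz1 (congrArg Prod.snd h)
    · left
      apply zpowers_eq_of_prime A 5 h
      · have := A.pow_mem ht (2 * j)
        have hx : x = y ^ 3 := by exact_mod_cast hyk 3 (by push_cast; omega)
        have e1 : x ^ (2 * j) = ζu 5 := by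
          rw [hx, ← pow_mul, ← hj, show 3 * (2 * j) = 5 * j + j by ring, pow_add, pow_mul, hy5]
          simp
        have e2 : y ^ (2 * j) = ζu 5 ^ 2 := by rw [← hj, ← pow_mul, mul_comm]
        rw [Prod.pow_mk, e1, e2] at this
        exact this
      · intro h; exact hz1 (congrArg Prod.fst h)

/-!
STATEMENT 5: a finite non-cyclic subgroup G ≤ N with π(G) cyclic of order 4 and
|G ∩ T| ∈ {1,2,3,5} is conjugate in N to ⟨τ_{ζ₅,ζ₅²}, ι₁·s⟩ ≅ 𝔉₅ = C₅⋊C₄ (order 20)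
or to ⟨τ_{−1,−1}, ι₁·s⟩ ≅ C₂ × C₄.
-/
theorem classification_nu_C4 (G : Subgroup NQ) (hfin : Finite G) (hnc : ¬IsCyclic G)
    (hcyc : IsCyclic (Subgroup.map πN G))
    (hord : Nat.card (Subgroup.map πN G) = 4)
    (hT : Nat.card (G ⊓ Tsub : Subgroup NQ) ∈ ({1, 2, 3, 5} : Set ℕ)) :
    (∃ h : NQ,
      Subgroup.map (MulAut.conj h).toMonoidHom G =
        Subgroup.closure {tl (ζu 5) (ζu 5 ^ 2), rr d1s} ∧
      Nat.card (Subgroup.closure {tl (ζu 5) (ζu 5 ^ 2), rr d1s} : Subgroup NQ) = 20) ∨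
    (∃ h : NQ,
      Subgroup.map (MulAut.conj h).toMonoidHom G =
        Subgroup.closure {tl (-1) (-1), rr d1s} ∧
      Nonempty ((Subgroup.closure {tl (-1) (-1), rr d1s} : Subgroup NQ) ≃*
        Multiplicative (ZMod 2 × ZMod 4))) := by
  -- an element of G above ι₁ s
  obtain ⟨⟨d, hd⟩, hgen⟩ := hcyc.exists_generator
  have hgen' : Subgroup.map πN G = Subgroup.zpowers d := by
    apply le_antisymm
    · intro x hx
      obtain ⟨k, hk⟩ := Subgroup.mem_zpowers_iff.1 (hgen ⟨x, hx⟩)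
      exact ⟨k, congrArg Subtype.val hk⟩
    · rwa [Subgroup.zpowers_le]
  have hod : orderOf d = 4 := by rw [← Nat.card_zpowers, ← hgen', hord]
  have hmap : Subgroup.map πN G = Subgroup.zpowers d1s := by
    rw [hgen']
    rcases DD_order4 d hod with rfl | rfl
    · rfl
    · exact Subgroup.zpowers_inv
  obtain ⟨g, hgG, hg⟩ : d1s ∈ Subgroup.map πN G := by
    rw [hmap]; exact Subgroup.mem_zpowers _
  obtain ⟨⟨a, b⟩, e⟩ := g
  have he : e = d1s := hg
  subst he
  obtain ⟨t, ht⟩ := exists_conj a b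
  -- replace G by a conjugate
  set u : NQ := SemidirectProduct.inl t with hu
  set G' := Subgroup.map (MulAut.conj u).toMonoidHom G with hG'
  have hr : rr d1s ∈ G' := ⟨_, hgG, ht⟩
  have hz : ∀ g ∈ G', g.right ∈ Subgroup.zpowers d1s := by
    rintro _ ⟨x, hx, rfl⟩
    have h1 : πN x ∈ Subgroup.map πN G := ⟨x, hx, rfl⟩
    rw [hmap] at h1
    have h2 : (MulAut.conj u x).right = πN x := by
      rw [MulAut.conj_apply]; simp [hu, πN]
    change (MulAut.conj u x).right ∈ _
    rw [h2]; exact h1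
  have hcG : Nat.card G' = Nat.card G :=
    Nat.card_congr (G.equivMapOfInjective _ (MulAut.conj u).injective).symm.toEquiv
  have hcomap : G'.comap (SemidirectProduct.inl : TT →* NQ) =
      G.comap (SemidirectProduct.inl : TT →* NQ) := by
    have hfix : ∀ s : TT, MulAut.conj u (SemidirectProduct.inl s) = SemidirectProduct.inl s := by
      intro s
      rw [MulAut.conj_apply, hu, ← map_inv, ← map_mul, ← map_mul, mul_comm t s,
        mul_inv_cancel_right]
    ext s
    constructor
    · rintro ⟨x, hx, hxs⟩
      have : x = SemidirectProduct.inl s := (MulAut.conj u).injective (hxs.trans (hfix s).symm)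
      rw [Subgroup.mem_comap, ← this]; exact hx
    · intro hs
      exact ⟨_, hs, hfix s⟩
  have hcA : Nat.card (G'.comap (SemidirectProduct.inl : TT →* NQ)) =
      Nat.card (G ⊓ Tsub : Subgroup NQ) := by
    rw [hcomap, inf_comm, Tsub, ← Subgroup.map_comap_eq]
    exact Nat.card_congr (Subgroup.equivMapOfInjective _ _
      SemidirectProduct.inl_injective).toEquiv
  have hinv : ∀ s ∈ G'.comap (SemidirectProduct.inl : TT →* NQ),
      (s.2⁻¹, s.1) ∈ G'.comap (SemidirectProduct.inl : TT →* NQ) := by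
    intro s hs
    rw [Subgroup.mem_comap, ← inl_conj]
    exact G'.mul_mem (G'.mul_mem hr hs) (G'.inv_mem hr)
  have hcard := card_G G hord
  rw [← hcA] at hT hcard
  rcases torus_part _ hinv hT with hA | hA | ⟨h5, hA | hA⟩
  · exfalso
    apply hnc
    have h1 := closure_eq G' hr hz _ hA
    have h2 : G' = Subgroup.zpowers (rr d1s) := by
      rw [h1, map_one, Subgroup.closure_insert_one, Subgroup.zpowers_eq_closure]
    have : IsCyclic G' := by rw [h2]; infer_instance
    exact (G.equivMapOfInjective _ (MulAut.conj u).injective).isCyclic.2 this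
  · right
    exact ⟨u, closure_eq G' hr hz _ hA, c2c4⟩
  · left
    have h1 : G' = Subgroup.closure {tl (ζu 5) (ζu 5 ^ 2), rr d1s} := closure_eq G' hr hz _ hA
    exact ⟨u, h1, by rw [← h1, hcG, hcard, h5]⟩
  · left
    have h1 : G' = Subgroup.closure {tl (ζu 5 ^ 2) (ζu 5), rr d1s} := closure_eq G' hr hz _ hA
    have h2 : Subgroup.map (MulAut.conj (rr dsA * u)).toMonoidHom G =
        Subgroup.map (MulAut.conj (rr dsA)).toMonoidHom G' := by
      rw [hG', Subgroup.map_map, map_mul]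
      rfl
    refine ⟨rr dsA * u, ?_, ?_⟩
    · rw [h2, h1, conj_swap]
    · rw [← conj_swap, ← h1, Subgroup.card_map_of_injective (MulAut.conj (rr dsA)).injective, hcG, hcard, h5]

end
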